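/- Let b ≥ 2 be an integer, s ∈ ℕ, let a = (a_j)_{j≥1} be a nondecreasing sequence of real weights, and let ρ_b be the smallest prime factor of b. Set n_j = #{i ∈ ℕ : i + a_j ≤ 1}, S = (b−1)·∑_{j=1}^s n_j, T_s = S + 2√((b−1)s), C_s = exp( S + (log b)/2 + 2(b−1)s/log b )·(1 − exp(−(log b)/2))^{−1}, and C''_s = (log ρ_b)²·(log b)/(2·T_s²). Then for every positive integer d there exists a digital net P over ℤ_b with precision l satisfying |P| = b^d, l ≥ (log ρ_b / T_s)²·d² − 1 − a_1, and e^wor(P, W'_{s,a}) ≤ C_s · exp(−C''_s · d²). -/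

import Mathlib

open MeasureTheory Matrix Filter
open scoped ENNReal BigOperators Topology

noncomputable section

/-- The `b`-adic digit of `k : ℕ` at place `b^i` (i.e. the `(i+1)`-st digit). -/
def natDigit (b k i : ℕ) : ℕ := k / b ^ i % b

/-- The `(i+1)`-st `b`-adic digit of a real number `x ∈ [0,1)`
(using the expansion in which infinitely many digits differ from `b-1`). -/
def realDigit (b : ℕ) (x : ℝ) (i : ℕ) : ℕ := (⌊x * (b : ℝ) ^ (i + 1)⌋ % (b : ℤ)).toNat

/-- The `k`-th one-dimensional `b`-adic Walsh function. -/
def wal1 (b k : ℕ) (x : ℝ) : ℂ :=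
  Complex.exp (2 * Real.pi * Complex.I / (b : ℂ) *
    ((∑ i ∈ Finset.range k, natDigit b k i * realDigit b x i : ℕ) : ℂ))

/-- The `k`-th `s`-dimensional `b`-adic Walsh function. -/
def wal (b : ℕ) {s : ℕ} (k : Fin s → ℕ) (x : Fin s → ℝ) : ℂ :=
  ∏ j, wal1 b (k j) (x j)

/-- The unit cube `[0,1)^s`. -/
def unitCube (s : ℕ) : Set (Fin s → ℝ) := Set.univ.pi fun _ => Set.Ico (0 : ℝ) 1

/-- The `k`-th Walsh coefficient of `f`. -/
def walshCoeff (b : ℕ) {s : ℕ} (f : (Fin s → ℝ) → ℝ) (k : Fin s → ℕ) : ℂ :=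
  ∫ x in unitCube s, (f x : ℂ) * (starRingEnd ℂ) (wal b k x)

/-- The generalized Dick weight `μ_a(k)`, one-dimensional case. -/
def dickWt (b : ℕ) (a : ℝ) (k : ℕ) : ℝ :=
  ∑ i ∈ Finset.range k, if natDigit b k i ≠ 0 then ((i : ℝ) + 1 + a) else 0

/-- The generalized Dick weight `μ_a(k)` for vectors. -/
def dickWtV (b : ℕ) {s : ℕ} (a : Fin s → ℝ) (k : Fin s → ℕ) : ℝ :=
  ∑ j, dickWt b (a j) (k j)

/-- The modified Dick weight `μ'_a(k)`, one-dimensional case. -/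
def mdickWt (b : ℕ) (a : ℝ) (k : ℕ) : ℝ :=
  ∑ i ∈ Finset.range k, if natDigit b k i ≠ 0 then max ((i : ℝ) + 1 + a) 1 else 0

/-- The modified Dick weight `μ'_a(k)` for vectors. -/
def mdickWtV (b : ℕ) {s : ℕ} (a : Fin s → ℝ) (k : Fin s → ℕ) : ℝ :=
  ∑ j, mdickWt b (a j) (k j)

/-- Digitwise subtraction modulo `b` of natural numbers. -/
def dsub (b k k' : ℕ) : ℕ :=
  ∑ i ∈ Finset.range (k + k' + 1), ((natDigit b k i + (b - natDigit b k' i)) % b) * b ^ i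

/-- The integral of `f` over the unit cube. -/
def intBox (s : ℕ) (f : (Fin s → ℝ) → ℝ) : ℝ := ∫ x in unitCube s, f x

/-- Membership in the Walsh space `W_{s,a}`: `f` equals its (convergent) Walsh series
and has finite norm. -/
def MemW (b : ℕ) {s : ℕ} (a : Fin s → ℝ) (f : (Fin s → ℝ) → ℝ) : Prop :=
  (∀ x ∈ unitCube s, HasSum (fun k : Fin s → ℕ => walshCoeff b f k * wal b k x) ((f x : ℂ))) ∧
  BddAbove (Set.range fun k : Fin s → ℕ => ‖walshCoeff b f k‖ * (b : ℝ) ^ dickWtV b a k)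

/-- The norm of the Walsh space `W_{s,a}`. -/
def normW (b : ℕ) {s : ℕ} (a : Fin s → ℝ) (f : (Fin s → ℝ) → ℝ) : ℝ :=
  ⨆ k : Fin s → ℕ, ‖walshCoeff b f k‖ * (b : ℝ) ^ dickWtV b a k

/-- Membership in the modified Walsh space `W'_{s,a}`. -/
def MemW' (b : ℕ) {s : ℕ} (a : Fin s → ℝ) (f : (Fin s → ℝ) → ℝ) : Prop :=
  (∀ x ∈ unitCube s, HasSum (fun k : Fin s → ℕ => walshCoeff b f k * wal b k x) ((f x : ℂ))) ∧
  BddAbove (Set.range fun k : Fin s → ℕ => ‖walshCoeff b f k‖ * (b : ℝ) ^ mdickWtV b a k)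

/-- The norm of the modified Walsh space `W'_{s,a}`. -/
def normW' (b : ℕ) {s : ℕ} (a : Fin s → ℝ) (f : (Fin s → ℝ) → ℝ) : ℝ :=
  ⨆ k : Fin s → ℕ, ‖walshCoeff b f k‖ * (b : ℝ) ^ mdickWtV b a k

/-- The worst-case error of the algorithm `A` over the unit ball of `(H, N)`. -/
def worstErr (s : ℕ) (H : Set ((Fin s → ℝ) → ℝ)) (N : ((Fin s → ℝ) → ℝ) → ℝ)
    (A : ((Fin s → ℝ) → ℝ) → ℝ) : ℝ≥0∞ :=
  ⨆ (f : (Fin s → ℝ) → ℝ) (_ : f ∈ H) (_ : N f ≤ 1), ENNReal.ofReal |intBox s f - A f|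

/-- The `n`-th minimal worst-case error over all algorithms using `n` function values
at points of the unit cube. -/
def minErr (n s : ℕ) (H : Set ((Fin s → ℝ) → ℝ)) (N : ((Fin s → ℝ) → ℝ) → ℝ) : ℝ≥0∞ :=
  ⨅ (t : Fin n → Fin s → ℝ) (_ : ∀ i, t i ∈ unitCube s) (φ : (Fin n → ℝ) → ℝ),
    worstErr s H N fun f => φ fun i => f (t i)

/-- Partial derivative in the `j`-th coordinate. -/
def pd {s : ℕ} (j : Fin s) (f : (Fin s → ℝ) → ℝ) : (Fin s → ℝ) → ℝ :=
  fun x => deriv (fun t => f (Function.update x j t)) (x j)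

/-- The mixed partial derivative `f^{(α)}`. -/
def mpd {s : ℕ} (α : Fin s → ℕ) (f : (Fin s → ℝ) → ℝ) : (Fin s → ℝ) → ℝ :=
  (List.finRange s).foldr (fun j g => (pd j)^[α j] g) f

/-- Membership in the space `S_{s,u}` of smooth functions. -/
def MemS {s : ℕ} (u : Fin s → ℝ) (f : (Fin s → ℝ) → ℝ) : Prop :=
  ContDiff ℝ (⊤ : ℕ∞) f ∧
  BddAbove (Set.range fun α : Fin s → ℕ =>
    (∫ x in unitCube s, |mpd α f x|) / ∏ j, u j ^ α j)

/-- The norm of the space `S_{s,u}`. -/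
def normS {s : ℕ} (u : Fin s → ℝ) (f : (Fin s → ℝ) → ℝ) : ℝ :=
  ⨆ α : Fin s → ℕ, (∫ x in unitCube s, |mpd α f x|) / ∏ j, u j ^ α j

/-- The column vector of the first `m` `b`-adic digits of `k`. -/
def trunc (b m k : ℕ) : Fin m → ZMod b := fun i => (natDigit b k (i : ℕ) : ZMod b)

/-- The `m`-th point of the digital net determined by generating matrices `G`. -/
def netPoint (b : ℕ) {s l d : ℕ} (G : Fin s → Matrix (Fin l) (Fin d) (ZMod b)) (m : ℕ) :
    Fin s → ℝ :=
  fun j => ∑ i : Fin l, (((G j).mulVec (trunc b d m)) i).val / (b : ℝ) ^ ((i : ℕ) + 1)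

/-- The dual net of the digital net determined by `G`. -/
def dualNet (b : ℕ) {s l d : ℕ} (G : Fin s → Matrix (Fin l) (Fin d) (ZMod b)) :
    Set (Fin s → ℕ) :=
  {k | ∑ j, (G j)ᵀ.mulVec (trunc b l (k j)) = 0}

/-- The QMC algorithm given by the digital net with generating matrices `G`. -/
def qmcNet (b : ℕ) {s l d : ℕ} (G : Fin s → Matrix (Fin l) (Fin d) (ZMod b))
    (f : (Fin s → ℝ) → ℝ) : ℝ :=
  ((b : ℝ) ^ d)⁻¹ * ∑ m ∈ Finset.range (b ^ d), f (netPoint b G m)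

/-- `n_j = #{i ∈ ℕ : i + a ≤ 1}` (with `i` ranging over positive integers). -/
def negCount (a : ℝ) : ℕ := Set.ncard {i : ℕ | 0 < i ∧ (i : ℝ) + a ≤ 1}


/-!
The integration error of a digital net on a function `f` is the sum of the Walsh coefficients of
`f` over the nonzero elements of the dual net, so it suffices to find a net whose dual net contains
only elements of large weight `μ'`. For a fixed `k` with a nonzero digit among the first `l`, the
matrices having `k` in their dual net form a subgroup of index at least `ρ_b ^ d`; as a group is not
a union of fewer subgroups than their least index, all `k ≠ 0` with `μ' k < r ^ 2` can be avoided at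
once as soon as there are fewer than `ρ_b ^ d` of them. Both the number of such `k` and the sum of
`b ^ (-μ' k)` over the remaining ones are controlled by the generating function
`∑ k, exp (-t * μ' k)`, which factors over the digits and is at most `exp (S + (b - 1) * s / t)`.
-/

section Digits

variable {b : ℕ}

lemma natDigit_eq_zero_of_lt_pow {k i n : ℕ} (hk : k < b ^ n) (hi : n ≤ i) :
    natDigit b k i = 0 := by
  rcases b.eq_zero_or_pos with rfl | hb
  · obtain rfl : n = 0 := by by_contra hn; simp [hn] at hk
    obtain rfl : k = 0 := by simpa using hk
    simp [natDigit]
  · rw [natDigit, Nat.div_eq_of_lt (hk.trans_le (Nat.pow_le_pow_right hb hi)), Nat.zero_mod]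

lemma natDigit_eq_zero_of_le {k i : ℕ} (h : k ≤ i) : natDigit b k i = 0 := by
  rcases lt_or_ge 1 b with hb | hb
  · exact natDigit_eq_zero_of_lt_pow (h.trans_lt (Nat.lt_pow_self hb)) le_rfl
  · interval_cases b
    · rcases i.eq_zero_or_pos with rfl | hi
      · simp [natDigit, Nat.le_zero.1 h]
      · simp [natDigit, zero_pow hi.ne']
    · simp [natDigit, Nat.mod_one]

lemma natDigit_log_ne_zero (hb : 1 < b) {k : ℕ} (hk : k ≠ 0) : natDigit b k (Nat.log b k) ≠ 0 := by
  have hlt : k / b ^ Nat.log b k < b :=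
    Nat.div_lt_of_lt_mul (by simpa only [pow_succ] using Nat.lt_pow_succ_log_self hb k)
  rw [natDigit, Nat.mod_eq_of_lt hlt]
  exact (Nat.div_pos (Nat.pow_log_le_self b hk) (by positivity)).ne'

lemma natDigit_finFunctionFinEquiv {n : ℕ} (u : Fin n → Fin b) (i : Fin n) :
    natDigit b (finFunctionFinEquiv u) i = u i :=
  congrArg Fin.val (congrFun (finFunctionFinEquiv.symm_apply_apply u) i)

lemma sum_range_natDigit_eq {M : Type*} [AddCommMonoid M] {k n : ℕ} (hk : k < b ^ n)
    {g : ℕ → ℕ → M} (hg : ∀ i, g i 0 = 0) :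
    ∑ i ∈ Finset.range k, g i (natDigit b k i) = ∑ i ∈ Finset.range n, g i (natDigit b k i) := by
  rcases le_total k n with h | h
  · refine Finset.sum_subset (Finset.range_mono h) fun i _ hi => ?_
    rw [natDigit_eq_zero_of_le (by simpa using hi), hg]
  · refine (Finset.sum_subset (Finset.range_mono h) fun i _ hi => ?_).symm
    rw [natDigit_eq_zero_of_lt_pow hk (by simpa using hi), hg]

lemma trunc_zero (m : ℕ) : trunc b m 0 = 0 := by
  ext i
  simp [trunc, natDigit]

lemma trunc_ne_zero (hb : 1 < b) {k m : ℕ} (hk : k ≠ 0) (hkm : k < b ^ m) : trunc b m k ≠ 0 := by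
  intro h
  have hlog : Nat.log b k < m := Nat.log_lt_of_lt_pow hk hkm
  have hdvd : b ∣ natDigit b k (Nat.log b k) :=
    (ZMod.natCast_eq_zero_iff _ _).1 (congrFun h ⟨_, hlog⟩)
  exact natDigit_log_ne_zero hb hk
    (Nat.eq_zero_of_dvd_of_lt hdvd (Nat.mod_lt _ (zero_lt_one.trans hb)))

lemma trunc_finFunctionFinEquiv_val [NeZero b] {m : ℕ} (u : Fin m → ZMod b) :
    trunc b m (finFunctionFinEquiv fun i => (⟨(u i).val, ZMod.val_lt _⟩ : Fin b)) = u := by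
  ext i
  rw [trunc, natDigit_finFunctionFinEquiv, ZMod.natCast_zmod_val]

lemma sum_range_pow_trunc [NeZero b] {M : Type*} [AddCommMonoid M] {m : ℕ}
    (F : (Fin m → ZMod b) → M) :
    ∑ k ∈ Finset.range (b ^ m), F (trunc b m k) = ∑ u, F u := by
  have hinj : Function.Injective fun x : ZMod b => (⟨x.val, ZMod.val_lt x⟩ : Fin b) :=
    fun x y h => ZMod.val_injective b (Fin.mk.inj h)
  let toFin : ZMod b ≃ Fin b := Equiv.ofBijective _
    ((Fintype.bijective_iff_injective_and_card _).2 ⟨hinj, by simp [ZMod.card]⟩)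
  rw [Finset.sum_range, ← ((Equiv.piCongrRight fun _ => toFin).trans finFunctionFinEquiv).sum_comp]
  exact Finset.sum_congr rfl fun u _ => congrArg F (trunc_finFunctionFinEquiv_val u)

end Digits

section Weights

variable {b s : ℕ}

/-- The constant `S = (b - 1) * ∑ j, n_j` of the paper, counting with multiplicity `b - 1` the digit
positions whose weight is truncated to `1`. -/
def truncatedMass (b : ℕ) (a : Fin s → ℝ) : ℝ := ((b : ℝ) - 1) * ∑ j, (negCount (a j) : ℝ)

/-- The constant `T_s` of the paper: fewer than `exp (T_s * r)` nonzero indices have modified Dick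
weight below `r ^ 2`. -/
def countingRate (b : ℕ) (a : Fin s → ℝ) : ℝ :=
  truncatedMass b a + 2 * Real.sqrt (((b : ℝ) - 1) * s)

lemma truncatedMass_nonneg (hb : 1 < b) (a : Fin s → ℝ) : 0 ≤ truncatedMass b a := by
  have : (1 : ℝ) < b := by exact_mod_cast hb
  exact mul_nonneg (by linarith) (Finset.sum_nonneg fun _ _ => Nat.cast_nonneg _)

lemma countingRate_pos (hb : 1 < b) (hs : 0 < s) (a : Fin s → ℝ) : 0 < countingRate b a := by
  have : (0 : ℝ) < (b : ℝ) - 1 := sub_pos.2 (by exact_mod_cast hb)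
  exact add_pos_of_nonneg_of_pos (truncatedMass_nonneg hb a) (by positivity)

lemma mdickWtV_zero (a : Fin s → ℝ) : mdickWtV b a 0 = 0 := by
  simp [mdickWtV, mdickWt]

lemma mdickWt_eq_sum_fin (a : ℝ) {k n : ℕ} (hk : k < b ^ n) :
    mdickWt b a k = ∑ i : Fin n, if natDigit b k i ≠ 0 then max ((i : ℝ) + 1 + a) 1 else 0 := by
  rw [mdickWt, sum_range_natDigit_eq hk
    (g := fun i c => if c ≠ 0 then max ((i : ℝ) + 1 + a) 1 else 0) (by simp), Finset.sum_range]

lemma max_le_mdickWtV_of_natDigit_ne_zero (a : Fin s → ℝ) {k : Fin s → ℕ} {j : Fin s} {i : ℕ}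
    (h : natDigit b (k j) i ≠ 0) : max ((i : ℝ) + 1 + a j) 1 ≤ mdickWtV b a k := by
  have hterm (j : Fin s) (i : ℕ) :
      0 ≤ if natDigit b (k j) i ≠ 0 then max ((i : ℝ) + 1 + a j) 1 else 0 := by
    split_ifs <;> positivity
  have hi : i ∈ Finset.range (k j) := by
    by_contra hi
    exact h (natDigit_eq_zero_of_le (by simpa using hi))
  calc max ((i : ℝ) + 1 + a j) 1
      = if natDigit b (k j) i ≠ 0 then max ((i : ℝ) + 1 + a j) 1 else 0 := (if_pos h).symm
    _ ≤ mdickWt b (a j) (k j) := Finset.single_le_sum (f := fun i : ℕ =>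
        if natDigit b (k j) i ≠ 0 then max ((i : ℝ) + 1 + a j) 1 else 0) (fun i _ => hterm j i) hi
    _ ≤ mdickWtV b a k := Finset.single_le_sum (f := fun j => mdickWt b (a j) (k j))
        (fun j _ => Finset.sum_nonneg fun i _ => hterm j i) (Finset.mem_univ j)

lemma one_le_mdickWtV (hb : 1 < b) (a : Fin s → ℝ) {k : Fin s → ℕ} (hk : k ≠ 0) :
    1 ≤ mdickWtV b a k := by
  obtain ⟨j, hj⟩ := Function.ne_iff.1 hk
  exact (le_max_right _ _).trans
    (max_le_mdickWtV_of_natDigit_ne_zero a (natDigit_log_ne_zero hb hj))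

lemma add_le_mdickWtV_of_pow_le (hb : 1 < b) (a : Fin s → ℝ) {k : Fin s → ℕ} {j : Fin s} {l : ℕ}
    (h : b ^ l ≤ k j) : (l : ℝ) + 1 + a j ≤ mdickWtV b a k := by
  have hk : k j ≠ 0 := (lt_of_lt_of_le (by positivity) h).ne'
  have hlog : (l : ℝ) ≤ Nat.log b (k j) := by exact_mod_cast Nat.le_log_of_pow_le hb h
  calc (l : ℝ) + 1 + a j ≤ max ((Nat.log b (k j) : ℝ) + 1 + a j) 1 :=
        le_max_of_le_left (by linarith)
    _ ≤ mdickWtV b a k := max_le_mdickWtV_of_natDigit_ne_zero a (natDigit_log_ne_zero hb hk)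

end Weights

section GeneratingFunction

variable {b s : ℕ}

lemma sum_range_pow_exp_neg_mdickWt [NeZero b] (a t : ℝ) (n : ℕ) :
    ∑ k ∈ Finset.range (b ^ n), Real.exp (-(t * mdickWt b a k)) =
      ∏ i ∈ Finset.range n, (1 + ((b : ℝ) - 1) * Real.exp (-(t * max ((i : ℝ) + 1 + a) 1))) := by
  have hfactor (w : ℝ) : 1 + ((b : ℝ) - 1) * Real.exp (-(t * w)) =
      ∑ c : Fin b, Real.exp (-(t * if (c : ℕ) ≠ 0 then w else 0)) := by
    obtain ⟨b, rfl⟩ := Nat.exists_eq_succ_of_ne_zero (NeZero.ne b)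
    simp [Fin.sum_univ_succ]
  simp_rw [hfactor]
  rw [Finset.sum_range, ← finFunctionFinEquiv.sum_comp, Finset.prod_range, Finset.prod_univ_sum,
    Fintype.piFinset_univ]
  refine Finset.sum_congr rfl fun u _ => ?_
  rw [mdickWt_eq_sum_fin a (finFunctionFinEquiv u).2, ← Real.exp_sum]
  simp_rw [natDigit_finFunctionFinEquiv, Finset.mul_sum, Finset.sum_neg_distrib]

lemma negCount_eq_floor (a : ℝ) : negCount a = ⌊1 - a⌋₊ := by
  have hIcc : {i : ℕ | 0 < i ∧ (i : ℝ) + a ≤ 1} = ↑(Finset.Icc 1 ⌊1 - a⌋₊) := by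
    ext i
    simp only [Set.mem_ofPred_eq, Finset.coe_Icc, Set.mem_Icc]
    refine and_congr_right fun hi => ?_
    rw [Nat.le_floor_iff' hi.ne', le_sub_iff_add_le]
  rw [negCount, hIcc, Set.ncard_coe_finset, Nat.card_Icc, Nat.add_sub_cancel]

lemma sum_range_exp_neg_mul_succ_le {t : ℝ} (ht : 0 < t) (n : ℕ) :
    ∑ i ∈ Finset.range n, Real.exp (-(t * ((i : ℝ) + 1))) ≤ 1 / t := by
  have hterm (i : ℕ) : Real.exp (-(t * ((i : ℝ) + 1))) * t ≤
      Real.exp (-(t * i)) - Real.exp (-(t * (i + 1 : ℕ))) := by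
    have hsplit : Real.exp (-(t * i)) = Real.exp (-(t * ((i : ℝ) + 1))) * Real.exp t := by
      rw [← Real.exp_add]
      ring_nf
    rw [hsplit, Nat.cast_add_one]
    nlinarith [Real.add_one_le_exp t, Real.exp_pos (-(t * ((i : ℝ) + 1)))]
  rw [le_div_iff₀ ht, Finset.sum_mul]
  calc ∑ i ∈ Finset.range n, Real.exp (-(t * ((i : ℝ) + 1))) * t
      ≤ ∑ i ∈ Finset.range n, (Real.exp (-(t * i)) - Real.exp (-(t * (i + 1 : ℕ)))) :=
        Finset.sum_le_sum fun i _ => hterm i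
    _ = 1 - Real.exp (-(t * n)) := by
        rw [Finset.sum_range_sub' fun i : ℕ => Real.exp (-(t * i))]
        simp
    _ ≤ 1 := by linarith [Real.exp_pos (-(t * n))]

lemma sum_range_exp_neg_mul_max_le (a : ℝ) {t : ℝ} (ht : 0 < t) (n : ℕ) :
    ∑ i ∈ Finset.range n, Real.exp (-(t * max ((i : ℝ) + 1 + a) 1)) ≤ negCount a + 1 / t := by
  have hfloor : 1 - a < negCount a + 1 := by
    rw [negCount_eq_floor]
    exact Nat.lt_floor_add_one _
  calc ∑ i ∈ Finset.range n, Real.exp (-(t * max ((i : ℝ) + 1 + a) 1))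
      ≤ ∑ i ∈ Finset.range (negCount a + n), Real.exp (-(t * max ((i : ℝ) + 1 + a) 1)) :=
        Finset.sum_le_sum_of_subset_of_nonneg (Finset.range_mono (Nat.le_add_left _ _))
          fun _ _ _ => (Real.exp_pos _).le
    _ ≤ ∑ _i ∈ Finset.range (negCount a), (1 : ℝ) +
          ∑ i ∈ Finset.range n, Real.exp (-(t * ((i : ℝ) + 1))) := by
        rw [Finset.sum_range_add]
        gcongr with i _ i _
        · exact Real.exp_le_one_iff.2 (neg_nonpos.2 (by positivity))
        · refine le_max_of_le_left ?_
          push_cast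
          linarith
    _ ≤ negCount a + 1 / t := by
        gcongr
        · simp
        · exact sum_range_exp_neg_mul_succ_le ht n

lemma sum_range_pow_exp_neg_mdickWt_le [NeZero b] (a : ℝ) {t : ℝ} (ht : 0 < t) (n : ℕ) :
    ∑ k ∈ Finset.range (b ^ n), Real.exp (-(t * mdickWt b a k)) ≤
      Real.exp (((b : ℝ) - 1) * (negCount a + 1 / t)) := by
  have hb : (0 : ℝ) ≤ (b : ℝ) - 1 := sub_nonneg.2 (by exact_mod_cast NeZero.one_le)
  calc ∑ k ∈ Finset.range (b ^ n), Real.exp (-(t * mdickWt b a k))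
      = ∏ i ∈ Finset.range n, (1 + ((b : ℝ) - 1) * Real.exp (-(t * max ((i : ℝ) + 1 + a) 1))) :=
        sum_range_pow_exp_neg_mdickWt a t n
    _ ≤ ∏ i ∈ Finset.range n,
          Real.exp (((b : ℝ) - 1) * Real.exp (-(t * max ((i : ℝ) + 1 + a) 1))) := by
        gcongr with i
        rw [add_comm]
        exact Real.add_one_le_exp _
    _ = Real.exp (((b : ℝ) - 1) *
          ∑ i ∈ Finset.range n, Real.exp (-(t * max ((i : ℝ) + 1 + a) 1))) := by
        rw [← Real.exp_sum, Finset.mul_sum]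
    _ ≤ Real.exp (((b : ℝ) - 1) * (negCount a + 1 / t)) := by
        gcongr
        exact sum_range_exp_neg_mul_max_le a ht n

lemma exists_subset_piFinset_range_pow (hb : 1 < b) (A : Finset (Fin s → ℕ)) :
    ∃ n, A ⊆ Fintype.piFinset fun _ => Finset.range (b ^ n) := by
  refine ⟨A.sup fun k => ∑ j, k j, fun k hk => ?_⟩
  simp only [Fintype.mem_piFinset, Finset.mem_range]
  intro j
  calc k j ≤ ∑ j, k j := Finset.single_le_sum (fun _ _ => Nat.zero_le _) (Finset.mem_univ j)
    _ ≤ A.sup fun k => ∑ j, k j := Finset.le_sup (f := fun k : Fin s → ℕ => ∑ j, k j) hk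
    _ < b ^ A.sup fun k => ∑ j, k j := Nat.lt_pow_self hb

lemma sum_exp_neg_mdickWtV_le (hb : 1 < b) (a : Fin s → ℝ) {t : ℝ} (ht : 0 < t)
    (A : Finset (Fin s → ℕ)) :
    ∑ k ∈ A, Real.exp (-(t * mdickWtV b a k)) ≤
      Real.exp (truncatedMass b a + ((b : ℝ) - 1) * s / t) := by
  have : NeZero b := ⟨by lia⟩
  obtain ⟨n, hn⟩ := exists_subset_piFinset_range_pow hb A
  calc ∑ k ∈ A, Real.exp (-(t * mdickWtV b a k))
      ≤ ∑ k ∈ Fintype.piFinset fun _ : Fin s => Finset.range (b ^ n),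
          Real.exp (-(t * mdickWtV b a k)) :=
        Finset.sum_le_sum_of_subset_of_nonneg hn fun _ _ _ => (Real.exp_pos _).le
    _ = ∏ j, ∑ k ∈ Finset.range (b ^ n), Real.exp (-(t * mdickWt b (a j) k)) := by
        rw [Finset.prod_univ_sum]
        refine Finset.sum_congr rfl fun k _ => ?_
        rw [← Real.exp_sum, Finset.sum_neg_distrib, ← Finset.mul_sum, mdickWtV]
    _ ≤ ∏ j, Real.exp (((b : ℝ) - 1) * (negCount (a j) + 1 / t)) := by
        gcongr with j
        exact sum_range_pow_exp_neg_mdickWt_le (a j) ht n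
    _ = Real.exp (truncatedMass b a + ((b : ℝ) - 1) * s / t) := by
        rw [← Real.exp_sum, ← Finset.mul_sum, Finset.sum_add_distrib, Finset.sum_const,
          Finset.card_univ, Fintype.card_fin, nsmul_eq_mul, truncatedMass]
        ring_nf

lemma card_le_exp_of_mdickWtV_le (hb : 1 < b) (a : Fin s → ℝ) {t M : ℝ} (ht : 0 < t)
    {A : Finset (Fin s → ℕ)} (hA : ∀ k ∈ A, mdickWtV b a k ≤ M) :
    (A.card : ℝ) ≤ Real.exp (truncatedMass b a + ((b : ℝ) - 1) * s / t + t * M) := by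
  have hcard : A.card * Real.exp (-(t * M)) ≤
      Real.exp (truncatedMass b a + ((b : ℝ) - 1) * s / t) :=
    calc A.card * Real.exp (-(t * M)) = ∑ _k ∈ A, Real.exp (-(t * M)) := by simp
      _ ≤ ∑ k ∈ A, Real.exp (-(t * mdickWtV b a k)) := by
          gcongr with k hk
          exact hA k hk
      _ ≤ _ := sum_exp_neg_mdickWtV_le hb a ht A
  rwa [Real.exp_neg, ← div_eq_mul_inv, div_le_iff₀ (Real.exp_pos _), ← Real.exp_add] at hcard

lemma card_lt_exp_countingRate_mul (hb : 1 < b) (hs : 0 < s) (a : Fin s → ℝ) {r : ℝ} (hr : 0 ≤ r)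
    {A : Finset (Fin s → ℕ)} (hA : ∀ k ∈ A, k ≠ 0 ∧ mdickWtV b a k < r ^ 2) :
    (A.card : ℝ) < Real.exp (countingRate b a * r) := by
  rcases lt_or_ge r 1 with hr1 | hr1
  · have hempty : A = ∅ := Finset.eq_empty_of_forall_notMem fun k hk => by
      nlinarith [one_le_mdickWtV hb a (hA k hk).1, (hA k hk).2]
    simpa [hempty] using Real.exp_pos _
  set q := Real.sqrt (((b : ℝ) - 1) * s) with hq
  have hb1 : (0 : ℝ) < (b : ℝ) - 1 := sub_pos.2 (by exact_mod_cast hb)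
  have hq0 : 0 < q := Real.sqrt_pos.2 (by positivity)
  have hqq : ((b : ℝ) - 1) * s = q * q := (Real.mul_self_sqrt (by positivity)).symm
  have hinsert : ∀ k ∈ insert 0 A, mdickWtV b a k ≤ r ^ 2 := by
    simp only [Finset.forall_mem_insert, mdickWtV_zero]
    exact ⟨sq_nonneg r, fun k hk => (hA k hk).2.le⟩
  -- `t = q / r` minimises the exponent `q * q / t + t * r ^ 2`.
  calc (A.card : ℝ) < (insert 0 A).card := by
        rw [Finset.card_insert_of_notMem fun h => (hA 0 h).1 rfl]
        exact_mod_cast Nat.lt_succ_self _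
    _ ≤ Real.exp (truncatedMass b a + q * q / (q / r) + q / r * r ^ 2) :=
        hqq ▸ card_le_exp_of_mdickWtV_le hb a (div_pos hq0 (by linarith)) hinsert
    _ = Real.exp (truncatedMass b a + 2 * q * r) := by
        congr 1
        field_simp
        ring
    _ ≤ Real.exp (countingRate b a * r) := by
        rw [countingRate, add_mul, ← hq]
        gcongr
        exact le_mul_of_one_le_right (truncatedMass_nonneg hb a) hr1

lemma sum_rpow_neg_mdickWtV_le (hb : 1 < b) (a : Fin s → ℝ) {M : ℝ} {A : Finset (Fin s → ℕ)}
    (hA : ∀ k ∈ A, M ≤ mdickWtV b a k) :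
    ∑ k ∈ A, (b : ℝ) ^ (-mdickWtV b a k) ≤
      Real.exp (truncatedMass b a + 2 * ((b : ℝ) - 1) * s / Real.log b) *
        Real.exp (-(Real.log b / 2 * M)) := by
  have hb1 : (1 : ℝ) < b := by exact_mod_cast hb
  have hlog : 0 < Real.log b := Real.log_pos hb1
  -- Half of the weight produces the decay in `M`; the other half keeps the sum finite.
  calc ∑ k ∈ A, (b : ℝ) ^ (-mdickWtV b a k)
      ≤ ∑ k ∈ A, Real.exp (-(Real.log b / 2 * mdickWtV b a k)) *
          Real.exp (-(Real.log b / 2 * M)) := by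
        gcongr with k hk
        rw [Real.rpow_def_of_pos (by linarith), ← Real.exp_add, Real.exp_le_exp]
        nlinarith [hA k hk]
    _ ≤ Real.exp (truncatedMass b a + ((b : ℝ) - 1) * s / (Real.log b / 2)) *
          Real.exp (-(Real.log b / 2 * M)) := by
        rw [← Finset.sum_mul]
        gcongr
        exact sum_exp_neg_mdickWtV_le hb a (half_pos hlog) A
    _ = _ := by
        congr 3
        field_simp

lemma tsum_rpow_neg_mdickWtV_le (hb : 1 < b) (a : Fin s → ℝ) {M : ℝ} {D : Set (Fin s → ℕ)}
    (hD : ∀ k ∈ D, M ≤ mdickWtV b a k) :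
    ∑' k : D, ENNReal.ofReal ((b : ℝ) ^ (-mdickWtV b a k)) ≤
      ENNReal.ofReal (Real.exp (truncatedMass b a + 2 * ((b : ℝ) - 1) * s / Real.log b) *
        Real.exp (-(Real.log b / 2 * M))) := by
  refine ENNReal.summable.tsum_le_of_sum_le fun A => ?_
  rw [← ENNReal.ofReal_sum_of_nonneg fun _ _ => by positivity]
  refine ENNReal.ofReal_le_ofReal ?_
  have hA : ∀ k ∈ A.map (Function.Embedding.subtype _), M ≤ mdickWtV b a k := by
    simpa using fun k hk _ => hD k hk
  simpa using sum_rpow_neg_mdickWtV_le hb a hA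

end GeneratingFunction

section DualNet

open scoped Pointwise in
lemma exists_forall_map_ne_zero {X Y ι : Type*} [AddGroup X] [AddGroup Y] (φ : ι → X →+ Y)
    {K : Finset ι} (hK : ∀ k ∈ K, K.card < Nat.card (φ k).range) :
    ∃ x, ∀ k ∈ K, φ k x ≠ 0 := by
  by_contra! hcover
  have hunion : ⋃ k ∈ K, (0 : X) +ᵥ ((φ k).ker : Set X) = Set.univ := by
    simpa [Set.eq_univ_iff_forall] using hcover
  obtain ⟨k, hk, -, hindex⟩ := AddSubgroup.exists_index_le_card_of_leftCoset_cover hunion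
  rw [AddSubgroup.index_ker] at hindex
  exact (hK k hk).not_ge hindex

/-- The homomorphism `G ↦ ∑ j, (G j)ᵀ *ᵥ κ j`. When `κ j` holds the digits of `k j`, its kernel
consists of the generating matrices whose dual net contains `k`. -/
def dualPairing {ι m n R : Type*} [Fintype ι] [Fintype m] [NonUnitalNonAssocSemiring R]
    (κ : ι → m → R) : (ι → Matrix m n R) →+ (n → R) where
  toFun G := ∑ j, (G j)ᵀ *ᵥ κ j
  map_zero' := by simp
  map_add' G H := by simp [Matrix.add_mulVec, Finset.sum_add_distrib]

lemma dualPairing_single {ι m n R : Type*} [Fintype ι] [Fintype m] [DecidableEq ι] [DecidableEq m]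
    [NonUnitalNonAssocSemiring R] (κ : ι → m → R) (j : ι) (i : m) (z : n → R) :
    dualPairing κ (Pi.single j (Matrix.of (Pi.single i z))) = fun e => z e * κ j i := by
  ext e
  simp only [dualPairing, AddMonoidHom.coe_mk, ZeroHom.coe_mk, Finset.sum_apply]
  rw [Finset.sum_eq_single j (fun j' _ hj' => by simp [hj']) (by simp)]
  simp [Matrix.mulVec, dotProduct, Pi.single_apply, ite_apply]

lemma addOrderOf_pow_le_card_range_dualPairing {ι m n R : Type*} [Fintype ι] [Fintype m] [Fintype n]
    [Ring R] [Finite R] (κ : ι → m → R) (j : ι) (i : m) :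
    addOrderOf (κ j i) ^ Fintype.card n ≤ Nat.card (dualPairing (n := n) κ).range := by
  classical
  have hrange (u : n → AddSubgroup.zmultiples (κ j i)) :
      (fun e => (u e : R)) ∈ (dualPairing (n := n) κ).range := by
    choose z hz using fun e => AddSubgroup.mem_zmultiples_iff.1 (u e).2
    refine ⟨Pi.single j (Matrix.of (Pi.single i fun e => (z e : R))), ?_⟩
    simp_rw [dualPairing_single, ← hz, zsmul_eq_mul]
  calc addOrderOf (κ j i) ^ Fintype.card n
      = Nat.card (n → AddSubgroup.zmultiples (κ j i)) := by
        rw [Nat.card_fun, Nat.card_zmultiples, Nat.card_eq_fintype_card]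
    _ ≤ Nat.card (dualPairing (n := n) κ).range :=
        Nat.card_le_card_of_injective (fun u => ⟨_, hrange u⟩) fun u v huv => by
          ext e
          exact congrFun (congrArg Subtype.val huv) e

lemma minFac_le_addOrderOf {b : ℕ} [NeZero b] {x : ZMod b} (hx : x ≠ 0) :
    b.minFac ≤ addOrderOf x := by
  have hpos : 0 < addOrderOf x := addOrderOf_pos x
  have hne : addOrderOf x ≠ 1 := by simpa using hx
  exact Nat.minFac_le_of_dvd (by lia) (addOrderOf_dvd_of_nsmul_eq_zero (by simp))

lemma exists_forall_notMem_dualNet {b s l d : ℕ} [NeZero b] {K : Finset (Fin s → ℕ)}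
    (hK : ∀ k ∈ K, ∃ j, trunc b l (k j) ≠ 0) (hcard : K.card < b.minFac ^ d) :
    ∃ G : Fin s → Matrix (Fin l) (Fin d) (ZMod b), ∀ k ∈ K, k ∉ dualNet b G := by
  refine exists_forall_map_ne_zero (fun k : Fin s → ℕ => dualPairing fun j => trunc b l (k j))
    fun k hk => ?_
  obtain ⟨j, hj⟩ := hK k hk
  obtain ⟨i, hi⟩ := Function.ne_iff.1 hj
  calc K.card < b.minFac ^ d := hcard
    _ ≤ addOrderOf (trunc b l (k j) i) ^ Fintype.card (Fin d) := by
        rw [Fintype.card_fin]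
        exact Nat.pow_le_pow_left (minFac_le_addOrderOf hi) d
    _ ≤ _ := addOrderOf_pow_le_card_range_dualPairing (fun j => trunc b l (k j)) j i

lemma exists_forall_mem_dualNet_sq_le_mdickWtV {b s l d : ℕ} (hb : 1 < b) (hs : 0 < s)
    (a : Fin s → ℝ) {r : ℝ} (hr : 0 ≤ r) (hrd : countingRate b a * r ≤ d * Real.log b.minFac)
    (hl : ∀ j, r ^ 2 - 1 - a j ≤ l) :
    ∃ G : Fin s → Matrix (Fin l) (Fin d) (ZMod b), ∀ k ∈ dualNet b G \ {0},
      r ^ 2 ≤ mdickWtV b a k := by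
  classical
  have : NeZero b := ⟨by lia⟩
  have hbox {k : Fin s → ℕ} (hk : mdickWtV b a k < r ^ 2) (j : Fin s) : k j < b ^ l := by
    by_contra! hkj
    linarith [hl j, add_le_mdickWtV_of_pow_le hb a hkj]
  let K : Finset (Fin s → ℕ) := {k ∈ Fintype.piFinset fun _ => Finset.range (b ^ l) |
    k ≠ 0 ∧ mdickWtV b a k < r ^ 2}
  have hKtrunc : ∀ k ∈ K, ∃ j, trunc b l (k j) ≠ 0 := by
    intro k hk
    obtain ⟨-, hk0, hkr⟩ := Finset.mem_filter.1 hk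
    obtain ⟨j, hj⟩ := Function.ne_iff.1 hk0
    exact ⟨j, trunc_ne_zero hb hj (hbox hkr j)⟩
  have hKcard : K.card < b.minFac ^ d := by
    have hlt : (K.card : ℝ) < (b.minFac : ℝ) ^ d :=
      calc (K.card : ℝ) < Real.exp (countingRate b a * r) :=
            card_lt_exp_countingRate_mul hb hs a hr fun k hk => (Finset.mem_filter.1 hk).2
        _ ≤ Real.exp (d * Real.log b.minFac) := Real.exp_le_exp.2 hrd
        _ = (b.minFac : ℝ) ^ d := by
            rw [Real.exp_nat_mul, Real.exp_log (by exact_mod_cast b.minFac_pos)]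
    exact_mod_cast hlt
  obtain ⟨G, hG⟩ := exists_forall_notMem_dualNet hKtrunc hKcard
  refine ⟨G, fun k ⟨hkG, hk0⟩ => ?_⟩
  by_contra! hkr
  refine hG k (Finset.mem_filter.2 ⟨?_, hk0, hkr⟩) hkG
  exact Fintype.mem_piFinset.2 fun j => Finset.mem_range.2 (hbox hkr j)

end DualNet

section WalshSums

lemma pow_val_rev_mul_pow_val_succ {M : Type*} [Monoid M] (x : M) {l : ℕ} (i : Fin l) :
    x ^ (i.rev : ℕ) * x ^ ((i : ℕ) + 1) = x ^ l := by
  rw [← pow_add, Fin.val_rev, Nat.sub_add_cancel i.2]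

variable {b : ℕ} [NeZero b] {s l d : ℕ}

/-- The real number `0.y₁y₂…y_l` in base `b`, with digits the representatives of `y i` in
`{0, …, b - 1}`; it is the form taken by the coordinates of the points of a digital net. -/
def digitPoint (y : Fin l → ZMod b) : ℝ := ∑ i : Fin l, ((y i).val : ℝ) / (b : ℝ) ^ ((i : ℕ) + 1)

lemma exists_digitPoint_eq_div (y : Fin l → ZMod b) :
    ∃ N < b ^ l, (∀ i : Fin l, natDigit b N i.rev = (y i).val) ∧
      digitPoint y = N / (b : ℝ) ^ l := by
  let u : Fin l → Fin b := fun i => ⟨(y i.rev).val, ZMod.val_lt _⟩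
  refine ⟨finFunctionFinEquiv u, (finFunctionFinEquiv u).2,
    fun i => by simp only [natDigit_finFunctionFinEquiv, u, Fin.rev_rev], ?_⟩
  have hb : (b : ℝ) ≠ 0 := NeZero.ne _
  rw [digitPoint, finFunctionFinEquiv_apply, Nat.cast_sum, Finset.sum_div,
    ← Equiv.sum_comp Fin.revPerm]
  refine Finset.sum_congr rfl fun i _ => ?_
  have hpow := pow_val_rev_mul_pow_val_succ (b : ℝ) i.rev
  rw [Fin.rev_rev] at hpow
  simp only [Fin.revPerm_apply, u, Nat.cast_mul, Nat.cast_pow, ← hpow]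
  field_simp

lemma digitPoint_mem_Ico (y : Fin l → ZMod b) : digitPoint y ∈ Set.Ico (0 : ℝ) 1 := by
  obtain ⟨N, hN, -, hy⟩ := exists_digitPoint_eq_div y
  have hb : (0 : ℝ) < b := by exact_mod_cast NeZero.pos b
  rw [hy]
  exact ⟨by positivity, (div_lt_one (by positivity)).2 (by exact_mod_cast hN)⟩

lemma realDigit_digitPoint (y : Fin l → ZMod b) (i : Fin l) :
    realDigit b (digitPoint y) i = (y i).val := by
  obtain ⟨N, -, hdigit, hy⟩ := exists_digitPoint_eq_div y
  have hb : (b : ℝ) ≠ 0 := NeZero.ne _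
  have hshift : digitPoint y * (b : ℝ) ^ ((i : ℕ) + 1) = (N : ℝ) / ((b ^ (i.rev : ℕ) : ℕ) : ℝ) := by
    rw [hy, ← pow_val_rev_mul_pow_val_succ _ i, Nat.cast_pow]
    field_simp
  rw [realDigit, hshift, Int.floor_div_natCast, Int.floor_natCast, ← hdigit i, natDigit]
  norm_cast

lemma realDigit_digitPoint_of_le (y : Fin l → ZMod b) {i : ℕ} (hi : l ≤ i) :
    realDigit b (digitPoint y) i = 0 := by
  obtain ⟨N, -, -, hy⟩ := exists_digitPoint_eq_div y
  have hb : (b : ℝ) ≠ 0 := NeZero.ne _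
  have hshift : digitPoint y * (b : ℝ) ^ (i + 1) = ((N * b ^ (i - l) * b : ℕ) : ℝ) := by
    obtain ⟨c, rfl⟩ := Nat.exists_eq_add_of_le hi
    rw [hy, Nat.add_sub_cancel_left]
    push_cast
    field_simp
    ring
  rw [realDigit, hshift, Int.floor_natCast]
  simp

lemma wal1_digitPoint (k : ℕ) (y : Fin l → ZMod b) :
    wal1 b k (digitPoint y) = ZMod.stdAddChar (trunc b l k ⬝ᵥ y) := by
  have hrange : ∑ i ∈ Finset.range k, natDigit b k i * realDigit b (digitPoint y) i =
      ∑ i : Fin l, natDigit b k i * (y i).val :=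
    calc ∑ i ∈ Finset.range k, natDigit b k i * realDigit b (digitPoint y) i
        = ∑ i ∈ Finset.range (max k l), natDigit b k i * realDigit b (digitPoint y) i := by
          refine Finset.sum_subset (Finset.range_mono (le_max_left _ _)) fun i _ hi => ?_
          rw [natDigit_eq_zero_of_le (by simpa using hi), zero_mul]
      _ = ∑ i ∈ Finset.range l, natDigit b k i * realDigit b (digitPoint y) i := by
          refine (Finset.sum_subset (Finset.range_mono (le_max_right _ _)) fun i _ hi => ?_).symm
          rw [realDigit_digitPoint_of_le y (by simpa using hi), mul_zero]
      _ = ∑ i : Fin l, natDigit b k i * (y i).val := by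
          simp_rw [Finset.sum_range, realDigit_digitPoint]
  have hdot : trunc b l k ⬝ᵥ y =
      ((∑ i : Fin l, natDigit b k i * (y i).val : ℕ) : ℤ) := by
    simp [dotProduct, trunc]
  rw [hdot, ZMod.stdAddChar_coe, wal1, hrange]
  push_cast
  ring_nf

lemma addChar_map_sum {A M ι : Type*} [AddCommMonoid A] [CommMonoid M] (ψ : AddChar A M)
    (S : Finset ι) (g : ι → A) : ψ (∑ i ∈ S, g i) = ∏ i ∈ S, ψ (g i) :=
  map_prod ψ.toMonoidHom (fun i => Multiplicative.ofAdd (g i)) S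

lemma wal_netPoint (G : Fin s → Matrix (Fin l) (Fin d) (ZMod b)) (m : ℕ) (k : Fin s → ℕ) :
    wal b k (netPoint b G m) =
      ZMod.stdAddChar ((∑ j, (G j)ᵀ *ᵥ trunc b l (k j)) ⬝ᵥ trunc b d m) :=
  calc wal b k (netPoint b G m)
      = ∏ j, ZMod.stdAddChar (trunc b l (k j) ⬝ᵥ (G j *ᵥ trunc b d m)) :=
        Finset.prod_congr rfl fun j _ => wal1_digitPoint (k j) (G j *ᵥ trunc b d m)
    _ = _ := by
        simp_rw [sum_dotProduct, addChar_map_sum, Matrix.mulVec_transpose,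
          Matrix.dotProduct_mulVec]

lemma netPoint_mem_unitCube (G : Fin s → Matrix (Fin l) (Fin d) (ZMod b)) (m : ℕ) :
    netPoint b G m ∈ unitCube s :=
  fun j _ => digitPoint_mem_Ico (G j *ᵥ trunc b d m)

lemma sum_stdAddChar_dotProduct {n : Type*} [Fintype n] [DecidableEq n] (c : n → ZMod b) :
    ∑ u : n → ZMod b, (ZMod.stdAddChar (c ⬝ᵥ u) : ℂ) =
      if c = 0 then (b : ℂ) ^ Fintype.card n else 0 := by
  split_ifs with hc
  · simp [hc, ZMod.card]
  · let ψ : AddChar (n → ZMod b) ℂ :=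
      ZMod.stdAddChar.compAddMonoidHom (dotProductBilin ℕ ℕ c).toAddMonoidHom
    refine (AddChar.sum_eq_zero_iff_ne_zero (ψ := ψ)).2 fun hψ => hc (funext fun i => ?_)
    have hi : ψ (Pi.single i 1) = 1 := by simp [hψ]
    refine ZMod.injective_stdAddChar (N := b) ?_
    simpa [ψ] using hi

lemma inv_mul_sum_wal_netPoint (G : Fin s → Matrix (Fin l) (Fin d) (ZMod b)) (k : Fin s → ℕ) :
    ((b : ℂ) ^ d)⁻¹ * ∑ m ∈ Finset.range (b ^ d), wal b k (netPoint b G m) =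
      (dualNet b G).indicator 1 k := by
  classical
  have hb : (b : ℂ) ≠ 0 := NeZero.ne _
  simp_rw [wal_netPoint]
  rw [sum_range_pow_trunc fun u =>
    (ZMod.stdAddChar ((∑ j, (G j)ᵀ *ᵥ trunc b l (k j)) ⬝ᵥ u) : ℂ),
    sum_stdAddChar_dotProduct, Fintype.card_fin, Set.indicator_apply]
  have hmem : k ∈ dualNet b G ↔ ∑ j, (G j)ᵀ *ᵥ trunc b l (k j) = 0 := Iff.rfl
  simp only [hmem]
  split_ifs <;> simp [hb]

end WalshSums

section WorstCaseError

variable {b s l d : ℕ}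

lemma walshCoeff_zero (b : ℕ) (f : (Fin s → ℝ) → ℝ) : walshCoeff b f 0 = (intBox s f : ℂ) := by
  have hwal (x : Fin s → ℝ) : wal b 0 x = 1 := by simp [wal, wal1]
  simp_rw [walshCoeff, intBox, hwal, map_one, mul_one]
  exact integral_ofReal

lemma zero_mem_dualNet (G : Fin s → Matrix (Fin l) (Fin d) (ZMod b)) : 0 ∈ dualNet b G := by
  simp [dualNet, trunc_zero]

lemma norm_walshCoeff_le [NeZero b] {a : Fin s → ℝ} {f : (Fin s → ℝ) → ℝ} (hf : MemW' b a f)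
    (hnorm : normW' b a f ≤ 1) (k : Fin s → ℕ) :
    ‖walshCoeff b f k‖ ≤ (b : ℝ) ^ (-mdickWtV b a k) := by
  have hb : (0 : ℝ) < b := by exact_mod_cast NeZero.pos b
  rw [Real.rpow_neg hb.le, ← one_div, le_div_iff₀ (Real.rpow_pos_of_pos hb _)]
  exact (le_ciSup hf.2 k).trans hnorm

lemma hasSum_indicator_dualNet_walshCoeff [NeZero b]
    (G : Fin s → Matrix (Fin l) (Fin d) (ZMod b)) {f : (Fin s → ℝ) → ℝ}
    (hf : ∀ x ∈ unitCube s, HasSum (fun k => walshCoeff b f k * wal b k x) (f x : ℂ)) :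
    HasSum ((dualNet b G).indicator (walshCoeff b f)) (qmcNet b G f : ℂ) := by
  have hmean := (hasSum_sum (s := Finset.range (b ^ d))
    fun m _ => hf (netPoint b G m) (netPoint_mem_unitCube G m)).mul_left (((b : ℂ) ^ d)⁻¹)
  have hindicator : (dualNet b G).indicator (walshCoeff b f) = fun k => ((b : ℂ) ^ d)⁻¹ *
      ∑ m ∈ Finset.range (b ^ d), walshCoeff b f k * wal b k (netPoint b G m) := by
    ext k
    rw [← Finset.mul_sum, mul_left_comm, inv_mul_sum_wal_netPoint]
    by_cases hk : k ∈ dualNet b G <;> simp [hk]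
  rw [hindicator]
  simpa [qmcNet] using hmean

lemma hasSum_dualNet_diff_zero_walshCoeff [NeZero b]
    (G : Fin s → Matrix (Fin l) (Fin d) (ZMod b)) {f : (Fin s → ℝ) → ℝ}
    (hf : ∀ x ∈ unitCube s, HasSum (fun k => walshCoeff b f k * wal b k x) (f x : ℂ)) :
    HasSum (fun k : ↥(dualNet b G \ {0}) => walshCoeff b f k)
      ((qmcNet b G f - intBox s f : ℝ) : ℂ) := by
  classical
  have hupdate := (hasSum_indicator_dualNet_walshCoeff G hf).update 0 0
  rw [Set.indicator_of_mem (zero_mem_dualNet G), walshCoeff_zero, zero_sub, neg_add_eq_sub,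
    ← Complex.ofReal_sub] at hupdate
  have hindicator : Function.update ((dualNet b G).indicator (walshCoeff b f)) 0 0 =
      (dualNet b G \ {0}).indicator (walshCoeff b f) := by
    ext k
    rcases eq_or_ne k 0 with rfl | hk
    · simp
    · by_cases hkG : k ∈ dualNet b G <;> simp [hk, hkG]
  rw [hindicator] at hupdate
  exact hasSum_subtype_iff_indicator.2 hupdate

lemma worstErr_qmcNet_le_tsum [NeZero b] (a : Fin s → ℝ)
    (G : Fin s → Matrix (Fin l) (Fin d) (ZMod b)) :
    worstErr s {f | MemW' b a f} (normW' b a) (qmcNet b G) ≤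
      ∑' k : ↥(dualNet b G \ {0}), ENNReal.ofReal ((b : ℝ) ^ (-mdickWtV b a k)) := by
  refine iSup_le fun f => iSup₂_le fun hf hnorm => ?_
  calc ENNReal.ofReal |intBox s f - qmcNet b G f|
      = ‖((qmcNet b G f - intBox s f : ℝ) : ℂ)‖ₑ := by
        rw [abs_sub_comm, ← Real.norm_eq_abs, ← Complex.norm_real, ofReal_norm]
    _ ≤ ∑' k : ↥(dualNet b G \ {0}), ‖walshCoeff b f k‖ₑ := by
        rw [← (hasSum_dualNet_diff_zero_walshCoeff G hf.1).tsum_eq]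
        exact enorm_tsum_le_tsum_enorm
    _ ≤ ∑' k : ↥(dualNet b G \ {0}), ENNReal.ofReal ((b : ℝ) ^ (-mdickWtV b a k)) := by
        refine ENNReal.tsum_le_tsum fun k => ?_
        rw [← ofReal_norm]
        exact ENNReal.ofReal_le_ofReal (norm_walshCoeff_le hf hnorm k)

end WorstCaseError

lemma exp_add_le_exp_mul_inv_one_sub_exp_neg {c : ℝ} (hc : 0 < c) (x y : ℝ) :
    Real.exp (x + y) ≤ Real.exp (x + c / 2 + y) * (1 - Real.exp (-c / 2))⁻¹ := by
  have hlt : Real.exp (-c / 2) < 1 := by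
    rw [Real.exp_lt_one_iff]
    linarith
  have hinv : 1 ≤ (1 - Real.exp (-c / 2))⁻¹ :=
    (one_le_inv₀ (by linarith)).2 (by linarith [Real.exp_pos (-c / 2)])
  calc Real.exp (x + y) ≤ Real.exp (x + c / 2 + y) := Real.exp_le_exp.2 (by linarith)
    _ ≤ _ := le_mul_of_one_le_right (Real.exp_pos _).le hinv

theorem statement15_general {b : ℕ} (hb : 2 ≤ b) {s : ℕ} (hs : 0 < s) (a : Fin s → ℝ) {d l : ℕ}
    (hl : ∀ j, (Real.log b.minFac / countingRate b a) ^ 2 * (d : ℝ) ^ 2 - 1 - a j ≤ l) :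
    ∃ G : Fin s → Matrix (Fin l) (Fin d) (ZMod b),
      worstErr s {f | MemW' b a f} (normW' b a) (qmcNet b G) ≤
        ENNReal.ofReal (Real.exp (truncatedMass b a + 2 * ((b : ℝ) - 1) * s / Real.log b) *
          Real.exp (-(Real.log b.minFac ^ 2 * Real.log b / (2 * countingRate b a ^ 2)) *
            (d : ℝ) ^ 2)) := by
  have : NeZero b := ⟨by lia⟩
  have hT : 0 < countingRate b a := countingRate_pos hb hs a
  set r := Real.log b.minFac / countingRate b a * d with hr
  obtain ⟨G, hG⟩ := exists_forall_mem_dualNet_sq_le_mdickWtV (l := l) (d := d) (r := r) hb hs a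
    (by positivity) (by rw [hr]; field_simp; rfl) (by simpa only [hr, mul_pow] using hl)
  refine ⟨G, (worstErr_qmcNet_le_tsum a G).trans
    ((tsum_rpow_neg_mdickWtV_le hb a hG).trans_eq ?_)⟩
  congr 3
  rw [hr]
  field_simp

/-- for every `d ≥ 1` there exists a digital net with `b^d` points and precision
`l ≥ (log ρ_b / T_s)²·d² - 1 - a_1` whose worst-case error on `W'_{s,a}` is at most
`C_s · exp(-C''_s·d²)`. -/
theorem statement15 (b : ℕ) (hb : 2 ≤ b) (s : ℕ) (hs : 0 < s)
    (a : ℕ → ℝ) (ha : Monotone a)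
    (S Ts Cs Cs'' : ℝ)
    (hS : S = ((b : ℝ) - 1) * ∑ j : Fin s, (negCount (a j) : ℝ))
    (hTs : Ts = S + 2 * Real.sqrt (((b : ℝ) - 1) * s))
    (hCs : Cs = Real.exp (S + Real.log b / 2 + 2 * ((b : ℝ) - 1) * s / Real.log b) *
      (1 - Real.exp (-(Real.log b) / 2))⁻¹)
    (hCs'' : Cs'' = (Real.log (Nat.minFac b)) ^ 2 * Real.log b / (2 * Ts ^ 2))
    (d : ℕ) (hd : 0 < d) :
    ∃ l : ℕ, d ≤ l ∧
      (Real.log (Nat.minFac b) / Ts) ^ 2 * (d : ℝ) ^ 2 - 1 - a 0 ≤ (l : ℝ) ∧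
      ∃ G : Fin s → Matrix (Fin l) (Fin d) (ZMod b),
        worstErr s {f | MemW' b (fun j : Fin s => a j) f} (normW' b (fun j : Fin s => a j))
            (qmcNet b G) ≤
          ENNReal.ofReal (Cs * Real.exp (-Cs'' * (d : ℝ) ^ 2)) := by
  subst hS hTs hCs hCs''
  set l := max d ⌈(Real.log b.minFac / countingRate b fun j : Fin s => a j) ^ 2 * (d : ℝ) ^ 2
    - 1 - a 0⌉₊
  have hl : (Real.log b.minFac / countingRate b fun j : Fin s => a j) ^ 2 * (d : ℝ) ^ 2
      - 1 - a 0 ≤ l := (Nat.le_ceil _).trans (Nat.cast_le.2 (le_max_right _ _))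
  obtain ⟨G, hG⟩ := statement15_general hb hs (fun j => a j) (d := d) (l := l)
    fun j => (by linarith [ha (Nat.zero_le j)])
  have hlog : 0 < Real.log b := Real.log_pos (by exact_mod_cast hb)
  refine ⟨l, le_max_left _ _, hl, G, hG.trans (ENNReal.ofReal_le_ofReal ?_)⟩
  exact mul_le_mul_of_nonneg_right (exp_add_le_exp_mul_inv_one_sub_exp_neg hlog _ _)
    (Real.exp_pos _).le

end
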